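/- arXiv:2112.05830 — 3 statements merged into one kernel-verified Lean document; each statement's English description precedes it below -/
import Mathlib

section
/- Let n ≥ 1 and m ≥ 1 be integers, fix a coupon type α, and let N be an integer with N ≥ 16·(m·n + n·ln n). If N coupons are drawn i.i.d. uniformly at random from n coupon types, then the probability that coupon type α appears fewer than m times is at most e^{−2·(m + ln n)} ≤ n^{−2}. -/
/-!
The bound is a Chernoff estimate with exponential parameter `ln 2`. Weight each outcome `f` by
`2⁻¹ ^ (number of occurrences of α)`. Since the draws are independent, the total weight factors as
`(n - 1/2) ^ N ≤ n ^ N * exp (-N / (2n))` (`sum_half_pow_count`, `sub_half_pow_le`). Every outcome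
with fewer than `m` occurrences has weight at least `2⁻¹ ^ m`, so the probability in question is at
most `2 ^ m * exp (-N / (2n)) ≤ exp (m - 8 (m + ln n)) ≤ exp (-2 (m + ln n))`.
-/

open Finset

/-- The generating function of the number of occurrences of `α`, evaluated at `1/2`. -/
lemma sum_half_pow_count (n N : ℕ) (α : Fin n) :
    ∑ f : Fin N → Fin n, (2⁻¹ : ℝ) ^ (univ.filter (fun i : Fin N => f i = α)).card
      = ((n : ℝ) - 2⁻¹) ^ N := by
  have hsum : ∑ a : Fin n, (if a = α then (2⁻¹ : ℝ) else 1) = (n : ℝ) - 2⁻¹ := by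
    have h : ∀ a : Fin n, (if a = α then (2⁻¹ : ℝ) else 1) = 1 - (if a = α then 2⁻¹ else 0) := by
      intro a
      split_ifs <;> norm_num
    simp [h]
  rw [← hsum, Fintype.sum_pow]
  refine sum_congr rfl fun f _ => ?_
  rw [prod_ite]
  simp

lemma sub_half_pow_le (n N : ℕ) (hn : 1 ≤ n) :
    ((n : ℝ) - 2⁻¹) ^ N ≤ (n : ℝ) ^ N * Real.exp (-(N / (2 * n))) := by
  have hn' : (1 : ℝ) ≤ n := by exact_mod_cast hn
  have h1 : (n : ℝ) - 2⁻¹ ≤ n * Real.exp (-(1 / (2 * n))) := by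
    have h := Real.add_one_le_exp (-(1 / (2 * (n : ℝ))))
    calc (n : ℝ) - 2⁻¹ = n * (-(1 / (2 * n)) + 1) := by field_simp; ring
      _ ≤ _ := by gcongr
  calc ((n : ℝ) - 2⁻¹) ^ N ≤ (n * Real.exp (-(1 / (2 * n)))) ^ N :=
        pow_le_pow_left₀ (by linarith) h1 N
    _ = _ := by
        rw [mul_pow, ← Real.exp_nat_mul]
        congr 2
        ring

/-- Markov's inequality for the weight `2⁻¹ ^ count`. -/
lemma card_few_mul_le (m n N : ℕ) (α : Fin n) :
    ((univ.filter (fun f : Fin N → Fin n =>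
        (univ.filter (fun i : Fin N => f i = α)).card < m)).card : ℝ) * 2⁻¹ ^ m
      ≤ ((n : ℝ) - 2⁻¹) ^ N := by
  rw [← sum_half_pow_count n N α, ← nsmul_eq_mul, ← sum_const]
  calc _ ≤ ∑ f ∈ univ.filter (fun f : Fin N → Fin n =>
          (univ.filter (fun i : Fin N => f i = α)).card < m),
        (2⁻¹ : ℝ) ^ (univ.filter (fun i : Fin N => f i = α)).card := by
        refine sum_le_sum fun f hf => ?_
        rw [mem_filter] at hf
        exact pow_le_pow_of_le_one (by norm_num) (by norm_num) hf.2.le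
    _ ≤ _ := by
        refine sum_le_sum_of_subset_of_nonneg (filter_subset _ _) fun f _ _ => ?_
        positivity

theorem coupon_appears_few_times_prob
    (m n N : ℕ) (hm : 1 ≤ m) (hn : 1 ≤ n)
    (hN : 16 * ((m : ℝ) * n + n * Real.log n) ≤ N) (α : Fin n) :
    ((univ.filter (fun f : Fin N → Fin n =>
        (univ.filter (fun i : Fin N => f i = α)).card < m)).card : ℝ) /
        (Fintype.card (Fin N → Fin n) : ℝ) ≤ Real.exp (-(2 * ((m : ℝ) + Real.log n))) ∧
    Real.exp (-(2 * ((m : ℝ) + Real.log n))) ≤ ((n : ℝ) ^ 2)⁻¹ := by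
  have hn' : (1 : ℝ) ≤ n := by exact_mod_cast hn
  have hn0 : (0 : ℝ) < n := by linarith
  have hlog : 0 ≤ Real.log n := Real.log_nonneg hn'
  have hm0 : (0 : ℝ) ≤ m := Nat.cast_nonneg m
  constructor
  · have hcard : (Fintype.card (Fin N → Fin n) : ℝ) = (n : ℝ) ^ N := by simp
    rw [hcard, div_le_iff₀ (by positivity)]
    have hmain := (card_few_mul_le m n N α).trans (sub_half_pow_le n N hn)
    rw [inv_pow, ← div_eq_mul_inv, div_le_iff₀ (by positivity)] at hmain
    have h2 : (2 : ℝ) ^ m ≤ Real.exp m := by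
      have h := Real.add_one_le_exp (1 : ℝ)
      calc (2 : ℝ) ^ m ≤ Real.exp 1 ^ m := by gcongr; linarith
        _ = Real.exp m := by rw [← Real.exp_nat_mul, mul_one]
    have hN' : 8 * ((m : ℝ) + Real.log n) ≤ N / (2 * n) := by
      rw [le_div_iff₀ (by positivity)]
      linarith
    calc _ ≤ (n : ℝ) ^ N * Real.exp (-(N / (2 * n))) * 2 ^ m := hmain
      _ ≤ (n : ℝ) ^ N * Real.exp (-(N / (2 * n))) * Real.exp m := by gcongr
      _ = Real.exp (-(N / (2 * n)) + m) * (n : ℝ) ^ N := by rw [Real.exp_add]; ring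
      _ ≤ _ := by gcongr; linarith
  · have h : ((n : ℝ) ^ 2)⁻¹ = Real.exp (-(2 * Real.log n)) := by
      rw [Real.exp_neg, two_mul, Real.exp_add, Real.exp_log hn0, sq]
    rw [h]
    gcongr
    linarith
end

section
/- Let m ≥ 8 be an integer, let r_e be an integer with 0 ≤ r_e ≤ (1/16)·m·log₂ m, and let S be a set of collectors with |S| ≥ m/2. If r_e unordered pairs of distinct collectors are drawn i.i.d. uniformly at random from m collectors, then the probability that every collector in S belongs to at least one of the r_e pairs is at most (1 − m^{−1/2})^{⌈m/2⌉} ≤ e^{−√m / 2}. (This is the key step in the paper's lower bound showing r_e = Ω(m log m) interactions are necessary to succeed with any positive constant probability when r_c = n·ln n − ω(n).) -/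
/-!
The events "collector `v` lies in some pair" are negatively correlated. Given that `w` is in no
pair, the sequence is uniform on pairs avoiding `w`; it arises from a uniform sequence by replacing
each `{w, u}` by `{u, x}` with `x` uniform, and for a set `T` not containing `w` this replacement
covers at least as much of `T`. So conditioning on `w` being missed can only make covering `T` more
likely (`covCount_mul_le`, whose one-step version is the double count `sum_pairs_le`). As `w` is
missed with probability `(1 - 2/m) ^ r`, adding the elements of `S` one at a time gives
`P(S covered) ≤ (1 - (1 - 2/m) ^ r) ^ |S|` (`covCount_le`), and the bound on `r` makes
`(1 - 2/m) ^ r ≥ m ^ (-1/2)` (`inv_sqrt_le_miss`).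
-/

open Finset

/-- An interaction: an unordered pair of two distinct collectors from `Fin m`. -/
abbrev Pair (m : ℕ) : Type := {p : Sym2 (Fin m) // ¬ p.IsDiag}

/-- The number of sequences of `r` interactions, all taken from `P`, in which every collector
of `T` occurs. -/
def covCount {m : ℕ} (P : Finset (Pair m)) (r : ℕ) (T : Finset (Fin m)) : ℕ :=
  #{σ : Fin r → Pair m | (∀ i, σ i ∈ P) ∧ ∀ v ∈ T, ∃ i, v ∈ (σ i).1}

/-- After the first interaction `p`, the remaining ones must cover `T` minus the ends of `p`. -/
lemma covCount_succ {m : ℕ} (P : Finset (Pair m)) (r : ℕ) (T : Finset (Fin m)) :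
    covCount P (r + 1) T = ∑ p ∈ P, covCount P r {v ∈ T | v ∉ p.1} := by
  unfold covCount
  rw [Finset.card_filter, ← (Fin.consEquiv (fun _ : Fin (r + 1) => Pair m)).sum_comp,
    Fintype.sum_prod_type, ← Finset.sum_filter_add_sum_filter_not univ (fun p => p ∈ P)]
  have h0 : ∑ p with p ∉ P, ∑ τ : Fin r → Pair m,
      (if (∀ i, (Fin.consEquiv (fun _ : Fin (r + 1) => Pair m)) (p, τ) i ∈ P) ∧
        ∀ v ∈ T, ∃ i, v ∈ ((Fin.consEquiv (fun _ : Fin (r + 1) => Pair m)) (p, τ) i).1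
        then 1 else 0) = 0 := by
    refine Finset.sum_eq_zero fun p hp => Finset.sum_eq_zero fun τ _ => if_neg ?_
    rintro ⟨h, -⟩
    exact (Finset.mem_filter.1 hp).2 (by simpa using h 0)
  rw [h0, add_zero, Finset.filter_univ_mem]
  refine Finset.sum_congr rfl fun p hp => ?_
  rw [Finset.card_filter]
  refine Finset.sum_congr rfl fun τ _ => ?_
  congr 1
  simp only [Fin.consEquiv_apply, Fin.forall_fin_succ, Fin.exists_fin_succ, Fin.cons_zero,
    Fin.cons_succ, hp, true_and, Finset.mem_filter, eq_iff_iff]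
  refine and_congr_right fun _ => forall_congr' fun v => ?_
  tauto

lemma covCount_anti {m : ℕ} (P : Finset (Pair m)) (r : ℕ) {T T' : Finset (Fin m)} (h : T ⊆ T') :
    covCount P r T' ≤ covCount P r T := by
  refine Finset.card_le_card fun σ hσ => ?_
  simp only [Finset.mem_filter, Finset.mem_univ, true_and] at hσ ⊢
  exact ⟨hσ.1, fun v hv => hσ.2 v (h hv)⟩

/-- A pair containing `w` meets at least `m - 2` pairs avoiding `w`. -/
lemma le_card_meeting {m : ℕ} (w : Fin m) (p : Pair m) (hp : w ∈ p.1) :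
    m - 2 ≤ #{q : Pair m | w ∉ q.1 ∧ ∃ u, u ∈ p.1 ∧ u ∈ q.1} := by
  obtain ⟨p, hd⟩ := p
  obtain ⟨u, rfl⟩ := Sym2.mem_iff_exists.1 hp
  have hwu : w ≠ u := by simpa using hd
  have hc : #(univ \ {w, u} : Finset (Fin m)) = m - 2 := by
    rw [Finset.card_sdiff_of_subset (Finset.subset_univ _), Finset.card_pair hwu]; simp
  rw [← hc, ← Finset.card_attach]
  have hx (x : {x // x ∈ (univ \ {w, u} : Finset (Fin m))}) : x.1 ≠ w ∧ x.1 ≠ u := by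
    have := x.2
    simpa only [Finset.mem_sdiff, Finset.mem_univ, Finset.mem_insert, Finset.mem_singleton,
      true_and, not_or] using this
  refine Finset.card_le_card_of_injOn
    (fun x => ⟨s(u, x.1), by simpa using (hx x).2.symm⟩) ?_ ?_
  · intro x _
    simp only [Finset.coe_filter, Finset.mem_univ, true_and, Set.mem_ofPred_eq, Sym2.mem_iff]
    refine ⟨?_, u, by simp, by simp⟩
    have := (hx x).1
    rintro (h | h)
    · exact hwu h
    · exact this h.symm
  · intro x _ y _ hxy
    exact Subtype.ext (Sym2.congr_right.1 (congrArg Subtype.val hxy))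

/-- A pair `{a, b}` avoiding `w` meets only two pairs containing `w`, namely `{w, a}`, `{w, b}`. -/
lemma card_meeting_le {m : ℕ} (w : Fin m) (q : Pair m) (hq : w ∉ q.1) :
    #{p : Pair m | w ∈ p.1 ∧ ∃ u, u ∈ p.1 ∧ u ∈ q.1} ≤ 2 := by
  obtain ⟨q, hd⟩ := q
  induction q using Sym2.ind with
  | _ a b =>
  rw [← Finset.card_map (Function.Embedding.subtype _)]
  refine (Finset.card_le_card (t := {s(w, a), s(w, b)}) ?_).trans Finset.card_le_two
  intro p hp
  simp only [Finset.mem_map, Finset.mem_filter, Finset.mem_univ, true_and,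
    Function.Embedding.coe_subtype] at hp
  obtain ⟨p, ⟨hw, u, hup, huq⟩, rfl⟩ := hp
  have huw : w ≠ u := by rintro rfl; exact hq huq
  rw [(Sym2.mem_and_mem_iff huw).1 ⟨hw, hup⟩]
  rcases Sym2.mem_iff.1 huq with rfl | rfl <;> simp

/-- If `h` does not decrease when a pair containing `w` is replaced by a pair avoiding `w` that
shares an end with it, then the mean of `h` over all pairs is at most its mean over the pairs
avoiding `w`, a proportion `(m - 2) / m` of all pairs. -/
lemma sum_pairs_le {m : ℕ} (hm : 2 ≤ m) (w : Fin m) (h : Pair m → ℕ)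
    (hh : ∀ p q : Pair m, w ∈ p.1 → w ∉ q.1 → (∃ u, u ∈ p.1 ∧ u ∈ q.1) → h p ≤ h q) :
    (m - 2) * ∑ p, h p ≤ m * ∑ p with w ∉ p.1, h p := by
  have key : (m - 2) * ∑ p : Pair m with w ∈ p.1, h p ≤
      2 * ∑ p : Pair m with w ∉ p.1, h p := by
    calc (m - 2) * ∑ p : Pair m with w ∈ p.1, h p
        ≤ ∑ p : Pair m with w ∈ p.1,
            ∑ q : Pair m with w ∉ q.1 ∧ ∃ u, u ∈ p.1 ∧ u ∈ q.1, h p := by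
          rw [Finset.mul_sum]
          refine Finset.sum_le_sum fun p hp => ?_
          rw [Finset.sum_const, smul_eq_mul]
          exact Nat.mul_le_mul_right _ (le_card_meeting w p (Finset.mem_filter.1 hp).2)
      _ ≤ ∑ p : Pair m with w ∈ p.1,
            ∑ q : Pair m with w ∉ q.1 ∧ ∃ u, u ∈ p.1 ∧ u ∈ q.1, h q := by
          refine Finset.sum_le_sum fun p hp => Finset.sum_le_sum fun q hq => ?_
          simp only [Finset.mem_filter, Finset.mem_univ, true_and] at hp hq
          exact hh p q hp hq.1 hq.2
      _ = ∑ q : Pair m with w ∉ q.1,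
            ∑ p : Pair m with w ∈ p.1 ∧ ∃ u, u ∈ p.1 ∧ u ∈ q.1, h q := by
          refine Finset.sum_comm' fun p q => ?_
          simp only [Finset.mem_filter, Finset.mem_univ, true_and]
          tauto
      _ ≤ 2 * ∑ q : Pair m with w ∉ q.1, h q := by
          rw [Finset.mul_sum]
          refine Finset.sum_le_sum fun q hq => ?_
          rw [Finset.sum_const, smul_eq_mul]
          exact Nat.mul_le_mul_right _ (card_meeting_le w q (Finset.mem_filter.1 hq).2)
  rw [← Finset.sum_filter_add_sum_filter_not univ (fun p : Pair m => w ∈ p.1), mul_add]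
  obtain ⟨k, rfl⟩ := Nat.exists_eq_add_of_le' hm
  simp only [Nat.add_sub_cancel] at key ⊢
  linarith

/-- Negative correlation: missing `w` makes covering `T` no less likely. -/
lemma covCount_mul_le {m : ℕ} (hm : 2 ≤ m) (w : Fin m) (r : ℕ) (T : Finset (Fin m))
    (hw : w ∉ T) :
    (m - 2) ^ r * covCount univ r T ≤ m ^ r * covCount {p | w ∉ p.1} r T := by
  induction r generalizing T with
  | zero => simp [covCount]
  | succ r ih =>
    rw [covCount_succ, covCount_succ]
    have key := sum_pairs_le hm w (fun p => covCount {p | w ∉ p.1} r {v ∈ T | v ∉ p.1}) ?_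
    · have h1 : (m - 2) ^ r * ∑ p : Pair m, covCount univ r {v ∈ T | v ∉ p.1} ≤
          m ^ r * ∑ p : Pair m, covCount {p | w ∉ p.1} r {v ∈ T | v ∉ p.1} := by
        rw [Finset.mul_sum, Finset.mul_sum]
        exact Finset.sum_le_sum fun p _ => ih _ (by simp [hw])
      rw [pow_succ', pow_succ, mul_assoc, mul_assoc]
      refine (Nat.mul_le_mul_left _ h1).trans ?_
      rw [mul_left_comm]
      exact Nat.mul_le_mul_left _ key
    · rintro p q hp hq ⟨u, hup, huq⟩
      refine covCount_anti _ _ fun v hv => ?_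
      simp only [Finset.mem_filter] at hv ⊢
      refine ⟨hv.1, fun hvp => hv.2 ?_⟩
      -- `p = {w, u}` and `v ≠ w`, so `v = u ∈ q`.
      have hwu : w ≠ u := by rintro rfl; exact hq huq
      rw [(Sym2.mem_and_mem_iff hwu).1 ⟨hp, hup⟩, Sym2.mem_iff] at hvp
      rcases hvp with rfl | rfl
      · exact absurd hv.1 hw
      · exact huq

/-- Sequences covering `T` split according to whether they also cover `w`. -/
lemma covCount_insert {m : ℕ} (w : Fin m) (r : ℕ) (T : Finset (Fin m)) :
    covCount univ r (insert w T) + covCount {p | w ∉ p.1} r T = covCount univ r T := by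
  unfold covCount
  rw [← Finset.card_filter_add_card_filter_not
    (s := {σ : Fin r → Pair m | (∀ i, σ i ∈ univ) ∧ ∀ v ∈ T, ∃ i, v ∈ (σ i).1})
    (fun σ => ∃ i, w ∈ (σ i).1)]
  congr 2 <;> ext σ <;> simp [and_comm]

lemma covCount_le {m : ℕ} (hm : 2 ≤ m) (r : ℕ) (S : Finset (Fin m)) :
    (covCount univ r S : ℝ) ≤
      (1 - (1 - 2 / (m : ℝ)) ^ r) ^ #S * Fintype.card (Fin r → Pair m) := by
  have hm0 : (2 : ℝ) ≤ m := by exact_mod_cast hm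
  have hx0 : 0 ≤ 1 - 2 / (m : ℝ) := by
    rw [sub_nonneg, div_le_one (by linarith)]; exact hm0
  have hx1 : 1 - 2 / (m : ℝ) ≤ 1 := sub_le_self _ (by positivity)
  induction S using Finset.induction_on with
  | empty => simp [covCount]
  | insert w T hw ih =>
    have h1 : (covCount univ r (insert w T) : ℝ) + covCount {p | w ∉ p.1} r T
        = covCount univ r T := by exact_mod_cast covCount_insert w r T
    have h2 : ((m : ℝ) - 2) ^ r * covCount univ r T
        ≤ (m : ℝ) ^ r * covCount {p | w ∉ p.1} r T := by
      have := covCount_mul_le hm w r T hw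
      rw [← Nat.cast_le (α := ℝ)] at this
      push_cast [Nat.cast_sub hm] at this
      exact this
    have h3 : (1 - 2 / (m : ℝ)) ^ r * covCount univ r T ≤ covCount {p | w ∉ p.1} r T := by
      have : 1 - 2 / (m : ℝ) = (m - 2) / m := by field_simp
      rw [this, div_pow, div_mul_eq_mul_div, div_le_iff₀ (by positivity)]
      linarith
    rw [Finset.card_insert_of_notMem hw, pow_succ']
    calc (covCount univ r (insert w T) : ℝ)
        ≤ (1 - (1 - 2 / (m : ℝ)) ^ r) * covCount univ r T := by linarith
      _ ≤ (1 - (1 - 2 / (m : ℝ)) ^ r) * _ :=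
          mul_le_mul_of_nonneg_left ih (sub_nonneg.2 (pow_le_one₀ hx0 hx1))
      _ = _ := by ring

/-- A fixed collector is missed by all `r` interactions with probability at least `m ^ (-1/2)`. -/
lemma inv_sqrt_le_miss (m r : ℕ) (hm : 8 ≤ m)
    (hr : (r : ℝ) ≤ (1 / 16) * m * Real.logb 2 m) :
    (Real.sqrt m)⁻¹ ≤ (1 - 2 / (m : ℝ)) ^ r := by
  have hm0 : (8 : ℝ) ≤ m := by exact_mod_cast hm
  have hx : 0 < 1 - 2 / (m : ℝ) := by
    rw [sub_pos, div_lt_one (by linarith)]; linarith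
  rw [← Real.log_le_log_iff (by positivity) (by positivity), Real.log_inv, Real.log_pow,
    Real.log_sqrt (by positivity)]
  -- From `log x ≥ 1 - 1 / x`; the constant `8/3` is attained at `m = 8`.
  have h1 : -(8 / (3 * (m : ℝ))) ≤ Real.log (1 - 2 / (m : ℝ)) := by
    refine le_trans ?_ (Real.one_sub_inv_le_log_of_pos hx)
    have h2 : 1 - (1 - 2 / (m : ℝ))⁻¹ = -(2 / (m - 2)) := by
      have : (m : ℝ) - 2 ≠ 0 := by linarith
      have h3 : 1 - 2 / (m : ℝ) = (m - 2) / m := by field_simp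
      rw [h3, inv_div]; field_simp; ring
    rw [h2, neg_le_neg_iff, div_le_div_iff₀ (by linarith) (by linarith)]
    linarith
  have hl2 : (1 / 3 : ℝ) ≤ Real.log 2 := by linarith [Real.log_two_gt_d9]
  have hlm : 0 ≤ Real.log m := Real.log_nonneg (by linarith)
  have h4 : Real.logb 2 m ≤ 3 * Real.log m := by
    rw [Real.logb, div_le_iff₀ (by linarith)]
    nlinarith
  have h5 : (r : ℝ) * (8 / (3 * (m : ℝ))) ≤ Real.log m / 2 := by
    calc (r : ℝ) * (8 / (3 * (m : ℝ)))
        ≤ ((1 / 16) * m * Real.logb 2 m) * (8 / (3 * (m : ℝ))) := by gcongr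
      _ = Real.logb 2 m / 6 := by field_simp; ring
      _ ≤ _ := by linarith
  have h6 := mul_le_mul_of_nonneg_left h1 (Nat.cast_nonneg (α := ℝ) r)
  linarith

/-- **Lower bound ingredient for `r_e = Ω(m log m)`.**
`r_e` unordered pairs of distinct collectors are drawn i.i.d. uniformly at
random from `m ≥ 8` collectors (uniform measure on `Fin r_e → Pair m`,
probabilities as counting ratios).  If `r_e ≤ (1/16) m log₂ m` and
`S` is a set of collectors with `|S| ≥ m/2`, then the probability that every
collector in `S` belongs to at least one of the `r_e` pairs is at most
`(1 - m^{-1/2})^{⌈m/2⌉} ≤ e^{-√m / 2}`. -/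
theorem all_of_S_involved_prob
    (m r_e : ℕ) (hm : 8 ≤ m)
    (hre : (r_e : ℝ) ≤ (1 / 16) * m * Real.logb 2 m)
    (S : Finset (Fin m)) (hS : (m : ℝ) / 2 ≤ S.card) :
    ((univ.filter (fun σ : Fin r_e → Pair m =>
        ∀ v ∈ S, ∃ i : Fin r_e, v ∈ (σ i).1)).card : ℝ) /
        (Fintype.card (Fin r_e → Pair m) : ℝ) ≤
      (1 - (Real.sqrt m)⁻¹) ^ (⌈(m : ℝ) / 2⌉₊) ∧
    (1 - (Real.sqrt m)⁻¹) ^ (⌈(m : ℝ) / 2⌉₊) ≤ Real.exp (-Real.sqrt m / 2) := by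
  have hm0 : (8 : ℝ) ≤ m := by exact_mod_cast hm
  have hs : 1 ≤ Real.sqrt m := Real.one_le_sqrt.2 (by linarith)
  have hs0 : 0 < Real.sqrt m := by linarith
  have hc0 : 0 ≤ 1 - (Real.sqrt m)⁻¹ := sub_nonneg.2 (inv_le_one_of_one_le₀ hs)
  have hc1 : 1 - (Real.sqrt m)⁻¹ ≤ 1 := sub_le_self _ (by positivity)
  constructor
  · have hcov : #{σ : Fin r_e → Pair m | ∀ v ∈ S, ∃ i : Fin r_e, v ∈ (σ i).1}
        = covCount univ r_e S := by simp [covCount]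
    rw [hcov]
    have hx0 : 0 ≤ 1 - 2 / (m : ℝ) := by
      rw [sub_nonneg, div_le_one (by linarith)]; linarith
    have hx1 : 1 - 2 / (m : ℝ) ≤ 1 := sub_le_self _ (by positivity)
    have hmiss := inv_sqrt_le_miss m r_e hm hre
    refine (div_le_of_le_mul₀ (by positivity) ?_ (covCount_le (by omega) r_e S)).trans ?_
    · exact pow_nonneg (sub_nonneg.2 (pow_le_one₀ hx0 hx1)) _
    · calc (1 - (1 - 2 / (m : ℝ)) ^ r_e) ^ #S ≤ (1 - (Real.sqrt m)⁻¹) ^ #S :=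
            pow_le_pow_left₀ (sub_nonneg.2 (pow_le_one₀ hx0 hx1)) (by linarith) _
        _ ≤ _ := pow_le_pow_of_le_one hc0 hc1 (Nat.ceil_le.2 hS)
  · calc (1 - (Real.sqrt m)⁻¹) ^ ⌈(m : ℝ) / 2⌉₊
        ≤ Real.exp (-(Real.sqrt m)⁻¹) ^ ⌈(m : ℝ) / 2⌉₊ :=
          pow_le_pow_left₀ hc0 (Real.one_sub_le_exp_neg _) _
      _ = Real.exp (⌈(m : ℝ) / 2⌉₊ * -(Real.sqrt m)⁻¹) := (Real.exp_nat_mul _ _).symm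
      _ ≤ Real.exp (-Real.sqrt m / 2) := by
          rw [Real.exp_le_exp]
          have h1 := mul_le_mul_of_nonneg_right (Nat.le_ceil ((m : ℝ) / 2))
            (inv_nonneg.2 hs0.le)
          have h2 : (m : ℝ) / 2 * (Real.sqrt m)⁻¹ = Real.sqrt m / 2 := by
            field_simp
            exact (Real.sq_sqrt (by linarith)).symm
          linarith
end

section
/- Let m ≥ 1 and n ≥ 1 be integers with mn ≥ 2, and let T be an integer with T ≥ 6·m·ln(mn). Consider a single fixed coupon type and initial copy-counts c₀ : Fin m → ℕ such that the number of collectors v with c₀ v ≤ 1 is strictly less than m/3. Draw T unordered pairs of distinct collectors i.i.d. uniformly at random from m collectors, and process them in order: when pair {u,v} is processed, if one of the two collectors holds at least 2 copies and the other holds 0 copies, the former gives one copy to the latter (counts otherwise unchanged). Then the probability that some collector ends with 0 copies after all T interactions is at most m·(mn)^{−3}. -/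
/-!
Write `Φ(c) = ∑ v, (2 - c v)` with truncated subtraction: a collector with no copy contributes `2`,
one with a single copy contributes `1`, all others `0`. A transfer lowers the contribution of the
receiver by `1` and raises that of the giver by at most `1`, so `Φ` never increases. Initially `Φ`
is at most twice the number of collectors with at most one copy, hence less than `2m/3`; therefore
at every time fewer than `2m/3` collectors have at most one copy, so more than `m/3` have
at least two and can give.

Fix a collector `v`. As long as `v` has no copy, more than `m/3` of the `m(m-1)/2` pairs consist of
`v` and a possible giver, so each interaction supplies `v` with probability at least `2/(3m)`; once
`v` has a copy it never loses its last one. Hence `v` ends with no copy with probability at most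
`(1 - 2/(3m))^T` (`card_finalCounts_eq_zero_le`). The hypothesis on `T` makes this at most
`exp(-2T/(3m)) ≤ (mn)^{-4} ≤ (mn)^{-3}`, and a union bound over the `m` collectors concludes.
-/

open Finset

/-- `u` gives one copy (of the fixed coupon type) to `v`. -/
def give (m : ℕ) (c : Fin m → ℕ) (u v : Fin m) : Fin m → ℕ :=
  fun w => if w = v then 1 else if w = u then c u - 1 else c w

/-- Processing an interaction between `u` and `v`: if one of them holds at
least `2` copies and the other holds `0` copies, the former gives one copy to
the latter; otherwise nothing happens. -/
def stepOrd (m : ℕ) (c : Fin m → ℕ) (u v : Fin m) : Fin m → ℕ :=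
  if 2 ≤ c u ∧ c v = 0 then give m c u v
  else if 2 ≤ c v ∧ c u = 0 then give m c v u
  else c

theorem stepOrd_symm (m : ℕ) (c : Fin m → ℕ) :
    ∀ u v : Fin m, stepOrd m c u v = stepOrd m c v u := by
  intro u v
  unfold stepOrd
  split_ifs <;> first | rfl | omega

/-- Processing an unordered interaction pair. -/
def stepSym (m : ℕ) (c : Fin m → ℕ) (p : Sym2 (Fin m)) : Fin m → ℕ :=
  Sym2.lift ⟨stepOrd m c, stepOrd_symm m c⟩ p

/-- The copy-counts after deterministically processing, in order, the sequence
`σ` of interactions, starting from counts `c₀`. -/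
def finalCounts (m T : ℕ) (c₀ : Fin m → ℕ) (σ : Fin T → Pair m) : Fin m → ℕ :=
  (List.ofFn σ).foldl (fun c p => stepSym m c p.1) c₀

theorem stepSym_mk (m : ℕ) (c : Fin m → ℕ) (u v : Fin m) :
    stepSym m c s(u, v) = stepOrd m c u v := rfl

theorem stepSym_ne_zero (m : ℕ) (c : Fin m → ℕ) (p : Sym2 (Fin m)) (w : Fin m)
    (h : c w ≠ 0) : stepSym m c p w ≠ 0 := by
  induction p using Sym2.ind with
  | _ u v =>
    rw [stepSym_mk]
    unfold stepOrd give
    split_ifs <;> (try dsimp only) <;> (try split_ifs) <;> omega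

theorem foldl_ne_zero (m : ℕ) (l : List (Pair m)) (c : Fin m → ℕ) (w : Fin m)
    (h : c w ≠ 0) : l.foldl (fun c p => stepSym m c p.1) c w ≠ 0 := by
  induction l generalizing c with
  | nil => exact h
  | cons p l ih => exact ih _ (stepSym_ne_zero m c p.1 w h)

/-- The deficit of a configuration: the number of collectors with at most one copy plus the number
of collectors with none. The truncated subtraction is intended. -/
def deficit (m : ℕ) (c : Fin m → ℕ) : ℕ := ∑ v, (2 - c v)

theorem deficit_give_le (m : ℕ) (c : Fin m → ℕ) (u v : Fin m) (hu : 2 ≤ c u) (hv : c v = 0) :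
    deficit m (give m c u v) ≤ deficit m c := by
  have huv : u ≠ v := by rintro rfl; omega
  unfold deficit
  rw [← Finset.add_sum_erase univ _ (mem_univ v), ← Finset.add_sum_erase univ _ (mem_univ v),
    ← Finset.add_sum_erase (univ.erase v) _ (mem_erase.2 ⟨huv, mem_univ u⟩),
    ← Finset.add_sum_erase (univ.erase v) _ (mem_erase.2 ⟨huv, mem_univ u⟩)]
  have hrest : ∑ x ∈ (univ.erase v).erase u, (2 - give m c u v x)
      = ∑ x ∈ (univ.erase v).erase u, (2 - c x) := by
    refine Finset.sum_congr rfl fun x hx => ?_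
    simp only [mem_erase, mem_univ, and_true] at hx
    simp [give, hx.1, hx.2]
  rw [hrest]
  simp only [give, if_true, if_neg huv]
  omega

theorem deficit_stepSym_le (m : ℕ) (c : Fin m → ℕ) (p : Sym2 (Fin m)) :
    deficit m (stepSym m c p) ≤ deficit m c := by
  induction p using Sym2.ind with
  | _ u v =>
    rw [stepSym_mk]
    unfold stepOrd
    split_ifs with h₁ h₂
    · exact deficit_give_le m c u v h₁.1 h₁.2
    · exact deficit_give_le m c v u h₂.1 h₂.2
    · exact le_rfl

theorem card_low_le_deficit (m : ℕ) (c : Fin m → ℕ) :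
    (univ.filter (fun v => c v ≤ 1)).card ≤ deficit m c := by
  rw [Finset.card_filter, deficit]
  refine Finset.sum_le_sum fun v _ => ?_
  split_ifs <;> omega

theorem deficit_le_two_mul_card_low (m : ℕ) (c : Fin m → ℕ) :
    deficit m c ≤ 2 * (univ.filter (fun v => c v ≤ 1)).card := by
  rw [Finset.card_filter, deficit, Finset.mul_sum]
  refine Finset.sum_le_sum fun v _ => ?_
  split_ifs <;> omega

theorem lt_three_mul_card_high (m : ℕ) (c : Fin m → ℕ) (h : 3 * deficit m c < 2 * m) :
    m < 3 * (univ.filter (fun v => 2 ≤ c v)).card := by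
  have h₁ := card_low_le_deficit m c
  have h₂ := Finset.card_filter_add_card_filter_not (s := (univ : Finset (Fin m)))
    (fun v => c v ≤ 1)
  simp only [not_le, Finset.card_univ, Fintype.card_fin] at h₂
  have h₃ : univ.filter (fun v => 2 ≤ c v) = univ.filter (fun v => 1 < c v) := rfl
  rw [h₃]
  omega

theorem finalCounts_cons (m T : ℕ) (c : Fin m → ℕ) (p : Pair m) (σ : Fin T → Pair m) :
    finalCounts m (T + 1) c (Fin.cons p σ) = finalCounts m T (stepSym m c p.1) σ := by
  simp [finalCounts, List.ofFn_succ]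

theorem card_filter_cons {α : Type*} [Fintype α] (T : ℕ) (P : (Fin (T + 1) → α) → Prop)
    [DecidablePred P] :
    (univ.filter P).card = ∑ a : α, (univ.filter fun σ : Fin T → α => P (Fin.cons a σ)).card := by
  simp only [Finset.card_filter]
  rw [← Fintype.sum_prod_type' (f := fun (a : α) (σ : Fin T → α) =>
    if P (Fin.cons a σ) then 1 else 0)]
  exact (Fintype.sum_equiv (Fin.consEquiv fun _ => α) _ _ fun _ => rfl).symm

theorem two_mul_card_pair (m : ℕ) : 2 * Fintype.card (Pair m) = m * (m - 1) := by
  rw [Sym2.card_subtype_not_diag, Fintype.card_fin, Nat.choose_two_right]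
  exact Nat.mul_div_cancel' (Nat.even_mul_pred_self m).two_dvd

/-- If `v` has no copy, then at least as many interactions supply `v` as there are collectors with
at least two copies. -/
theorem card_high_le_card_supply (m : ℕ) (c : Fin m → ℕ) (v : Fin m) (hv : c v = 0) :
    (univ.filter (fun u => 2 ≤ c u)).card
      ≤ (univ.filter (fun p : Pair m => stepSym m c p.1 v ≠ 0)).card := by
  have hne : ∀ u ∈ univ.filter (fun u => 2 ≤ c u), u ≠ v := by
    rintro u hu rfl
    simp only [mem_filter] at hu
    omega
  let f : {u // u ∈ univ.filter (fun u => 2 ≤ c u)} → Pair m :=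
    fun u => ⟨s(u.1, v), by simpa using hne u.1 u.2⟩
  have hf : Function.Injective f := by
    intro a b hab
    have h : s(a.1, v) = s(b.1, v) := congrArg Subtype.val hab
    exact Subtype.ext (Sym2.congr_left.1 h)
  rw [← Finset.card_attach, ← Finset.card_image_of_injective _ hf]
  refine Finset.card_le_card fun p hp => ?_
  obtain ⟨u, -, rfl⟩ := Finset.mem_image.1 hp
  have hu : 2 ≤ c u.1 := (mem_filter.1 u.2).2
  rw [mem_filter]
  refine ⟨mem_univ _, ?_⟩
  change stepOrd m c u.1 v v ≠ 0
  simp [stepOrd, give, hu, hv]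

/-- The number of interaction sequences of length `T` that leave `v` without a copy is at most the
fraction `(1 - 2/(3m))^T` of all sequences. -/
theorem card_finalCounts_eq_zero_le (m T : ℕ) (hm : 1 ≤ m) (v : Fin m) (c : Fin m → ℕ)
    (hc : 3 * deficit m c < 2 * m) :
    ((univ.filter (fun σ : Fin T → Pair m => finalCounts m T c σ v = 0)).card : ℝ)
      ≤ ((1 - 2 / (3 * m)) * Fintype.card (Pair m)) ^ T := by
  have hm' : (1 : ℝ) ≤ m := by exact_mod_cast hm
  have hq : 0 ≤ 1 - 2 / (3 * (m : ℝ)) := by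
    rw [sub_nonneg, div_le_one (by positivity)]
    linarith
  have hA : 0 ≤ (1 - 2 / (3 * (m : ℝ))) * Fintype.card (Pair m) := by positivity
  induction T generalizing c with
  | zero =>
    rw [pow_zero]
    exact_mod_cast (Finset.card_le_univ _).trans (by simp)
  | succ T ih =>
    by_cases hv : c v = 0
    · set A := (1 - 2 / (3 * (m : ℝ))) * Fintype.card (Pair m) with hAdef
      rw [card_filter_cons]
      simp only [finalCounts_cons]
      push_cast
      have hterm : ∀ p : Pair m, ((univ.filter (fun σ : Fin T → Pair m =>
          finalCounts m T (stepSym m c p.1) σ v = 0)).card : ℝ)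
          ≤ if stepSym m c p.1 v = 0 then A ^ T else 0 := by
        intro p
        split_ifs with hp
        · exact ih _ (lt_of_le_of_lt (Nat.mul_le_mul_left 3 (deficit_stepSym_le m c p.1)) hc)
        · rw [Finset.filter_false_of_mem fun σ _ =>
          show ¬ finalCounts m T (stepSym m c p.1) σ v = 0 from foldl_ne_zero m _ _ v hp]
          simp
      refine (Finset.sum_le_sum fun p _ => hterm p).trans ?_
      rw [← Finset.sum_filter, Finset.sum_const, nsmul_eq_mul, pow_succ, mul_comm]
      refine mul_le_mul_of_nonneg_left ?_ (pow_nonneg hA T)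
      have h₁ := lt_three_mul_card_high m c hc
      have h₂ := card_high_le_card_supply m c v hv
      have h₃ := Finset.card_filter_add_card_filter_not (s := (univ : Finset (Pair m)))
        (fun p => stepSym m c p.1 v = 0)
      rw [Finset.card_univ] at h₃
      have h₄ := two_mul_card_pair m
      have h₅ : m * (m - 1) ≤ m * (3 * (univ.filter
          (fun p : Pair m => stepSym m c p.1 v ≠ 0)).card) :=
        Nat.mul_le_mul_left m (by omega)
      rw [← h₄] at h₅
      have h₃' : ((univ.filter (fun p : Pair m => stepSym m c p.1 v = 0)).card : ℝ)
          + (univ.filter (fun p : Pair m => stepSym m c p.1 v ≠ 0)).card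
          = Fintype.card (Pair m) := by exact_mod_cast h₃
      have h₅' : 2 * (Fintype.card (Pair m) : ℝ) ≤ m * (3 * (univ.filter
          (fun p : Pair m => stepSym m c p.1 v ≠ 0)).card) := by exact_mod_cast h₅
      have h₆ : 2 / (3 * (m : ℝ)) * Fintype.card (Pair m)
          ≤ (univ.filter (fun p : Pair m => stepSym m c p.1 v ≠ 0)).card := by
        rw [div_mul_eq_mul_div, div_le_iff₀ (by positivity)]
        linarith
      rw [hAdef, sub_mul, one_mul]
      linarith
    · rw [Finset.filter_false_of_mem fun σ _ =>
          show ¬ finalCounts m (T + 1) c σ v = 0 from foldl_ne_zero m _ _ v hv]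
      simpa using pow_nonneg hA (T + 1)

/-- **Exchanging phase succeeds for one coupon type.**
`T ≥ 6 m ln(mn)` unordered pairs of distinct collectors are drawn i.i.d.
uniformly at random from `m` collectors (uniform measure on `Fin T → Pair m`,
probabilities as counting ratios) and processed in order by the
give-one-copy rule.  If initially fewer than `m/3` collectors hold at most one
copy, then the probability that some collector ends with `0` copies is at most
`m (mn)^{-3}`. -/
theorem exchanging_phase_one_coupon
    (m n T : ℕ) (hm : 1 ≤ m) (hn : 1 ≤ n) (hmn : 2 ≤ m * n)
    (hT : 6 * (m : ℝ) * Real.log ((m : ℝ) * n) ≤ T)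
    (c₀ : Fin m → ℕ)
    (h₀ : ((univ.filter (fun v : Fin m => c₀ v ≤ 1)).card : ℝ) < (m : ℝ) / 3) :
    ((univ.filter (fun σ : Fin T → Pair m =>
        ∃ v : Fin m, finalCounts m T c₀ σ v = 0)).card : ℝ) /
        (Fintype.card (Fin T → Pair m) : ℝ) ≤ (m : ℝ) * (((m : ℝ) * n) ^ 3)⁻¹ := by
  have hm' : (1 : ℝ) ≤ m := by exact_mod_cast hm
  have hx : (2 : ℝ) ≤ (m : ℝ) * n := by exact_mod_cast hmn
  have hc : 3 * deficit m c₀ < 2 * m := by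
    have h₁ := deficit_le_two_mul_card_low m c₀
    have h₂ : 3 * (univ.filter (fun v : Fin m => c₀ v ≤ 1)).card < m := by
      have : 3 * ((univ.filter (fun v : Fin m => c₀ v ≤ 1)).card : ℝ) < m := by linarith
      exact_mod_cast this
    omega
  have hq : 0 ≤ 1 - 2 / (3 * (m : ℝ)) := by
    rw [sub_nonneg, div_le_one (by positivity)]
    linarith
  have hqT : (1 - 2 / (3 * (m : ℝ))) ^ T ≤ (((m : ℝ) * n) ^ 3)⁻¹ := by
    calc (1 - 2 / (3 * (m : ℝ))) ^ T
        ≤ Real.exp (-(2 / (3 * (m : ℝ)))) ^ T :=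
          pow_le_pow_left₀ hq (Real.one_sub_le_exp_neg _) T
      _ = Real.exp (-(2 * T / (3 * m))) := by
          rw [← Real.exp_nat_mul]
          congr 1
          ring
      _ ≤ Real.exp (-(3 * Real.log ((m : ℝ) * n))) := by
          have hlog : 0 ≤ Real.log ((m : ℝ) * n) := Real.log_nonneg (by linarith)
          refine Real.exp_le_exp.2 (neg_le_neg ?_)
          rw [le_div_iff₀ (by positivity)]
          nlinarith [mul_nonneg (zero_le_one.trans hm') hlog]
      _ = (((m : ℝ) * n) ^ 3)⁻¹ := by
          rw [Real.exp_neg, mul_comm, Real.exp_mul, Real.exp_log (by linarith)]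
          norm_cast
  -- For `m = 1` there are no pairs and the ratio is `0 / 0`; the bound below remains valid.
  refine div_le_of_le_mul₀ (Nat.cast_nonneg _) (by positivity) ?_
  have hunion : univ.filter (fun σ : Fin T → Pair m => ∃ v : Fin m, finalCounts m T c₀ σ v = 0)
      = univ.biUnion (fun v : Fin m =>
        univ.filter (fun σ : Fin T → Pair m => finalCounts m T c₀ σ v = 0)) := by
    ext σ
    simp
  rw [hunion]
  calc ((univ.biUnion (fun v : Fin m =>
        univ.filter (fun σ : Fin T → Pair m => finalCounts m T c₀ σ v = 0))).card : ℝ)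
      ≤ ∑ v : Fin m,
        ((univ.filter (fun σ : Fin T → Pair m => finalCounts m T c₀ σ v = 0)).card : ℝ) := by
        exact_mod_cast Finset.card_biUnion_le
    _ ≤ ∑ _v : Fin m, ((1 - 2 / (3 * (m : ℝ))) * Fintype.card (Pair m)) ^ T :=
        Finset.sum_le_sum fun v _ => card_finalCounts_eq_zero_le m T hm v c₀ hc
    _ = m * ((1 - 2 / (3 * (m : ℝ))) ^ T * (Fintype.card (Pair m) : ℝ) ^ T) := by
        rw [Finset.sum_const, Finset.card_univ, Fintype.card_fin, nsmul_eq_mul, mul_pow]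
    _ ≤ m * ((((m : ℝ) * n) ^ 3)⁻¹ * (Fintype.card (Pair m) : ℝ) ^ T) := by gcongr
    _ = m * (((m : ℝ) * n) ^ 3)⁻¹ * (Fintype.card (Fin T → Pair m) : ℝ) := by
        rw [Fintype.card_fun, Fintype.card_fin]
        push_cast
        ring
end
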